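/- arXiv:1405.1813 — 3 statements merged into one kernel-verified Lean document; each statement's English description precedes it below -/
import Mathlib

section
/- Let b ∈ (0,1) and let d : ℕ → ℝ. Assume the shadowing property: for all integers t ≥ 0 and s ≥ 1, if d(t) ≤ b^{s/9}, then d(t+n) > b^{n/9} for every integer n with 1 ≤ n ≤ 2s. Let m ≥ 0 be an integer and suppose d(n) > b^{n/18} for every integer n ≥ m. Then there exists an integer k with 0 ≤ k ≤ m such that d(k+n) > b^{n/9} for every integer n ≥ 1. -/
/-!
Call `n ≥ 1` *bad* for `k` if the orbit started at time `k` is too deep `n` steps later, and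
consider the times `k` none of whose bad `n` lie below `k`; `k = 0` is one of them. If such a `k`
has a bad `n`, then `k ≤ n`, so `k + n` is at most the length `2 * n` of the window protected by the
return at time `k + n`. Hence `k + n` is a larger time of the same kind, and the return is too deep
to occur at time `m` or later, so `k + n < m`. The largest such time `k ≤ m` therefore has no
bad `n`.
-/

open Real

section Thresholds

variable {α : Type*} [LinearOrder α] {φ ψ d : ℕ → α} {k m n : ℕ}

/-- The shadowing property of the depths `d` with respect to the thresholds `φ`: a return of
depth `φ s` protects the next `2 * s` times. Smaller values of `d` are deeper returns; in the
dynamical setting `φ s = b ^ (s / 9)`. -/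
def Shadowing (φ d : ℕ → α) : Prop :=
  ∀ t s : ℕ, 1 ≤ s → d t ≤ φ s → ∀ n : ℕ, 1 ≤ n → n ≤ 2 * s → φ n < d (t + n)

/-- The time `k` is controlled: the orbit started there is never too deep. The starting depth
`d k` itself is not constrained. -/
def IsControlled (φ d : ℕ → α) (k : ℕ) : Prop :=
  ∀ n : ℕ, 1 ≤ n → φ n < d (k + n)

/-- The time `k` is controlled as long as the orbit started there is younger than `k` itself.
This is the invariant that passes from `k` to the time of a return that is too deep for `k`. -/
def IsSelfControlled (φ d : ℕ → α) (k : ℕ) : Prop :=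
  ∀ n : ℕ, 1 ≤ n → n < k → φ n < d (k + n)

theorem isSelfControlled_zero : IsSelfControlled φ d 0 :=
  fun n _ hn => absurd hn n.not_lt_zero

theorem IsSelfControlled.le_of_deep (hk : IsSelfControlled φ d k) (hn : 1 ≤ n)
    (hdeep : d (k + n) ≤ φ n) : k ≤ n :=
  not_lt.mp fun hnk => (hk n hn hnk).not_ge hdeep

theorem Shadowing.isSelfControlled_add (hshadow : Shadowing φ d) (hkn : k ≤ n) (hn : 1 ≤ n)
    (hdeep : d (k + n) ≤ φ n) : IsSelfControlled φ d (k + n) :=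
  fun i hi hlt => hshadow (k + n) n hn hdeep i hi (by omega)

theorem lt_of_deep (hφψ : ∀ n s : ℕ, n ≤ 2 * s → φ s ≤ ψ n) (hd : ∀ n : ℕ, m ≤ n → ψ n < d n)
    {t s : ℕ} (hts : t ≤ 2 * s) (hdeep : d t ≤ φ s) : t < m :=
  not_le.mp fun hmt => (hd t hmt).not_ge (hdeep.trans (hφψ t s hts))

theorem controlled_point_exists_general (hφψ : ∀ n s : ℕ, n ≤ 2 * s → φ s ≤ ψ n)
    (hshadow : Shadowing φ d) (hd : ∀ n : ℕ, m ≤ n → ψ n < d n) :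
    ∃ k : ℕ, k ≤ m ∧ IsControlled φ d k := by
  obtain ⟨k, ⟨hkm, hk⟩, hmax⟩ := ((Set.finite_Iic m).sep (IsSelfControlled φ d)).exists_maximal
    ⟨0, m.zero_le, isSelfControlled_zero⟩
  refine ⟨k, hkm, fun n hn => not_le.mp fun hdeep => ?_⟩
  have hkn : k ≤ n := hk.le_of_deep hn hdeep
  have hlt : k + n < m := lt_of_deep hφψ hd (by omega) hdeep
  have hle : k + n ≤ k :=
    hmax ⟨hlt.le, hshadow.isSelfControlled_add hkn hn hdeep⟩ (Nat.le_add_right k n)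
  omega

end Thresholds

theorem rpow_div_nine_le_rpow_div_eighteen {b : ℝ} (hb0 : 0 < b) (hb1 : b ≤ 1) {x y : ℝ}
    (hxy : x ≤ 2 * y) : b ^ (y / 9) ≤ b ^ (x / 18) :=
  rpow_le_rpow_of_exponent_ge hb0 hb1 (by linarith)

/-- Combinatorial content of the controlled-points lemma: if the recurrence depths
`d n` satisfy the shadowing property and `d n > b^(n/18)` for all `n ≥ m`, then some
time `k ≤ m` is controlled, i.e. `d (k+n) > b^(n/9)` for all `n ≥ 1`. -/
theorem controlled_point_exists (b : ℝ) (hb : b ∈ Set.Ioo (0 : ℝ) 1) (d : ℕ → ℝ)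
    (hshadow : ∀ t s : ℕ, 1 ≤ s → d t ≤ b ^ ((s : ℝ) / 9) →
      ∀ n : ℕ, 1 ≤ n → n ≤ 2 * s → d (t + n) > b ^ ((n : ℝ) / 9))
    (m : ℕ) (hd : ∀ n : ℕ, m ≤ n → d n > b ^ ((n : ℝ) / 18)) :
    ∃ k : ℕ, k ≤ m ∧ ∀ n : ℕ, 1 ≤ n → d (k + n) > b ^ ((n : ℝ) / 9) :=
  controlled_point_exists_general
    (fun _ _ hns => rpow_div_nine_le_rpow_div_eighteen hb.1 hb.2.le (mod_cast hns)) hshadow hd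
end

section
/- Fix real numbers H ≥ 0 and 0 < λ_m ≤ λ_M. Let S ⊆ [0,H] × [λ_m,λ_M] be nonempty and convex, let Λ = { λ : (h,λ) ∈ S for some h }, and let I = [inf Λ, sup Λ]. Define F_S : ℝ → ℝ by F_S(β) = inf_{ε>0} sup{ h/λ : (h,λ) ∈ S, |λ - β| < ε }, with the convention sup ∅ = 0. Then F_S is continuous on the interval I. -/
open Real

/-- The abstract Lyapunov spectrum functional: `Fspec S β` is the infimum over `ε > 0`
of `sup { h/λ : (h,λ) ∈ S, |λ - β| < ε }`, with the convention `sup ∅ = 0`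
(which is Mathlib's convention for `sSup` on `ℝ`). -/
noncomputable def Fspec (S : Set (ℝ × ℝ)) (β : ℝ) : ℝ :=
  ⨅ ε : {ε : ℝ // 0 < ε},
    sSup {r : ℝ | ∃ p ∈ S, |p.2 - β| < (ε : ℝ) ∧ r = p.1 / p.2}

/-!
Let `K` be the closure of `S`, a compact convex set on which the ratio `h / λ` is continuous. By
compactness, `Fspec S β` is the maximum of the ratio over the fibre of `K` above `β`. Such a
fibrewise maximum is upper semicontinuous because `K` is compact. It is lower semicontinuous because
the projection of the convex set `K` to the line is an open map onto its image: joining a maximizer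
`p` above `β` to points of `K` on either side of it gives points above every nearby level that tend
to `p`.
-/

open Filter Set Topology Bornology

section OpenProjection

lemma exists_mem_Iic_mem_nhdsWithin {α : Type*} [LinearOrder α] [TopologicalSpace α]
    [ClosedIciTopology α] {s : Set α} {a : α} (ha : a ∈ s) :
    ∃ b ∈ s, a ≤ b ∧ Iic b ∈ 𝓝[s] a := by
  by_cases h : ∃ b ∈ s, a < b
  · obtain ⟨b, hb, hab⟩ := h
    exact ⟨b, hb, hab.le, mem_nhdsWithin_of_mem_nhds (Iic_mem_nhds hab)⟩
  · push Not at h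
    exact ⟨a, ha, le_rfl, mem_of_superset self_mem_nhdsWithin h⟩

lemma exists_mem_Ici_mem_nhdsWithin {α : Type*} [LinearOrder α] [TopologicalSpace α]
    [ClosedIicTopology α] {s : Set α} {a : α} (ha : a ∈ s) :
    ∃ b ∈ s, b ≤ a ∧ Ici b ∈ 𝓝[s] a :=
  exists_mem_Iic_mem_nhdsWithin (α := αᵒᵈ) ha

variable {E : Type*} [AddCommGroup E] [Module ℝ E] [TopologicalSpace E] [IsTopologicalAddGroup E]
  [ContinuousSMul ℝ E] {s : Set E} {p q : E}

lemma nhdsWithin_uIcc_le_map_of_convex (hs : Convex ℝ s) (φ : E →ᵃ[ℝ] ℝ) (hp : p ∈ s)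
    (hq : q ∈ s) : 𝓝[uIcc (φ p) (φ q)] (φ p) ≤ map φ (𝓝[s] p) := by
  rcases eq_or_ne (φ p) (φ q) with hpq | hpq
  · rw [← hpq, uIcc_self, nhdsWithin_singleton, ← map_pure]
    exact map_mono (pure_le_nhdsWithin hp)
  have hne : φ q - φ p ≠ 0 := sub_ne_zero.2 hpq.symm
  let t : ℝ → ℝ := fun y => (y - φ p) / (φ q - φ p)
  have ht : ∀ y ∈ uIcc (φ p) (φ q), t y ∈ Icc (0 : ℝ) 1 := by
    intro y hy
    rcases hne.lt_or_gt with hneg | hpos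
    · rw [uIcc_of_ge (sub_neg.1 hneg).le] at hy
      exact ⟨div_nonneg_of_nonpos (sub_nonpos.2 hy.2) hneg.le,
        (div_le_one_of_neg hneg).2 (sub_le_sub_right hy.1 _)⟩
    · rw [uIcc_of_le (sub_pos.1 hpos).le] at hy
      exact ⟨div_nonneg (sub_nonneg.2 hy.1) hpos.le,
        (div_le_one hpos).2 (sub_le_sub_right hy.2 _)⟩
  have hsection : ∀ y, φ (AffineMap.lineMap p q (t y)) = y := fun y => by
    rw [AffineMap.apply_lineMap, AffineMap.lineMap_apply_ring', div_mul_cancel₀ _ hne,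
      sub_add_cancel]
  have hcont : Tendsto (fun y => AffineMap.lineMap p q (t y)) (𝓝 (φ p)) (𝓝 p) := by
    have : Continuous fun y => AffineMap.lineMap p q (t y) := by
      simp only [AffineMap.lineMap_apply_module, t]
      fun_prop
    simpa [t] using this.tendsto (φ p)
  refine le_map_of_right_inverse (.of_forall hsection) (tendsto_nhdsWithin_iff.2
    ⟨hcont.mono_left nhdsWithin_le_nhds, ?_⟩)
  filter_upwards [self_mem_nhdsWithin] with y hy using hs.lineMap_mem hp hq (ht y hy)

lemma nhdsWithin_image_le_map_of_convex (hs : Convex ℝ s) (φ : E →ᵃ[ℝ] ℝ) (hp : p ∈ s) :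
    𝓝[φ '' s] (φ p) ≤ map φ (𝓝[s] p) := by
  obtain ⟨_, ⟨q, hq, rfl⟩, hpq, hIic⟩ := exists_mem_Iic_mem_nhdsWithin (mem_image_of_mem φ hp)
  obtain ⟨_, ⟨r, hr, rfl⟩, hrp, hIci⟩ := exists_mem_Ici_mem_nhdsWithin (mem_image_of_mem φ hp)
  have hmem : uIcc (φ p) (φ q) ∪ uIcc (φ p) (φ r) ∈ 𝓝[φ '' s] (φ p) := by
    rw [uIcc_of_le hpq, uIcc_of_ge hrp, union_comm, Icc_union_Icc_eq_Icc hrp hpq]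
    exact inter_mem hIci hIic
  calc 𝓝[φ '' s] (φ p)
      ≤ 𝓝[uIcc (φ p) (φ q)] (φ p) ⊔ 𝓝[uIcc (φ p) (φ r)] (φ p) := by
        rw [← nhdsWithin_union]
        exact nhdsWithin_le_iff.2 hmem
    _ ≤ map φ (𝓝[s] p) := sup_le (nhdsWithin_uIcc_le_map_of_convex hs φ hp hq)
        (nhdsWithin_uIcc_le_map_of_convex hs φ hp hr)

end OpenProjection

section FibrewiseMaximum

variable {X Y γ : Type*} [TopologicalSpace X] [TopologicalSpace Y] [LinearOrder γ]
  {K : Set X} {f : X → γ} {φ : X → Y} {M : Y → γ} {t : Set Y}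

lemma upperSemicontinuousOn_of_isGreatest_fiber [T2Space Y] (hK : IsCompact K)
    (hf : UpperSemicontinuousOn f K) (hφ : ContinuousOn φ K)
    (hM : ∀ y ∈ t, IsGreatest (f '' (K ∩ φ ⁻¹' {y})) (M y)) : UpperSemicontinuousOn M t := by
  intro y hy c hc
  have hclosed : IsClosed (φ '' (K ∩ f ⁻¹' Ici c)) :=
    ((hf.isCompact_inter_preimage_Ici hK c).image_of_continuousOn
      (hφ.mono inter_subset_left)).isClosed
  have hyc : y ∉ φ '' (K ∩ f ⁻¹' Ici c) := by
    rintro ⟨x, ⟨hxK, hcx⟩, hxy⟩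
    exact (hcx.trans ((hM y hy).2 ⟨x, ⟨hxK, hxy⟩, rfl⟩)).not_gt hc
  filter_upwards [self_mem_nhdsWithin,
    mem_nhdsWithin_of_mem_nhds (hclosed.isOpen_compl.mem_nhds hyc)] with z hz hzc
  obtain ⟨x, ⟨hxK, hxz⟩, hxM⟩ := (hM z hz).1
  rw [← hxM]
  exact not_le.1 fun hcx => hzc ⟨x, ⟨hxK, hcx⟩, hxz⟩

lemma lowerSemicontinuousOn_of_isGreatest_fiber (hf : LowerSemicontinuousOn f K)
    (hφ : ∀ x ∈ K, 𝓝[t] (φ x) ≤ map φ (𝓝[K] x))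
    (hM : ∀ y ∈ t, IsGreatest (f '' (K ∩ φ ⁻¹' {y})) (M y)) : LowerSemicontinuousOn M t := by
  intro y hy c hc
  obtain ⟨x, ⟨hxK, rfl⟩, hxM⟩ := (hM y hy).1
  rw [← hxM] at hc
  have hnear : φ '' {z ∈ K | c < f z} ∈ 𝓝[t] (φ x) :=
    hφ x hxK (image_mem_map (inter_mem self_mem_nhdsWithin (hf x hxK c hc)))
  filter_upwards [self_mem_nhdsWithin, hnear] with z hz hzx
  obtain ⟨w, ⟨hwK, hcw⟩, rfl⟩ := hzx
  exact hcw.trans_le ((hM (φ w) hz).2 ⟨w, ⟨hwK, rfl⟩, rfl⟩)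

theorem continuousOn_of_isGreatest_fiber_of_convex {E : Type*} [AddCommGroup E] [Module ℝ E]
    [TopologicalSpace E] [IsTopologicalAddGroup E] [ContinuousSMul ℝ E]
    [TopologicalSpace γ] [OrderTopology γ] {K : Set E} {f : E → γ} {φ : E →ᵃ[ℝ] ℝ} {M : ℝ → γ}
    (hK : IsCompact K) (hconv : Convex ℝ K) (hf : ContinuousOn f K) (hφ : ContinuousOn φ K)
    (hM : ∀ y ∈ φ '' K, IsGreatest (f '' (K ∩ φ ⁻¹' {y})) (M y)) : ContinuousOn M (φ '' K) :=
  continuousOn_iff_lower_upperSemicontinuousOn.2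
    ⟨lowerSemicontinuousOn_of_isGreatest_fiber hf.lowerSemicontinuousOn
      (fun _ hx => nhdsWithin_image_le_map_of_convex hconv φ hx) hM,
    upperSemicontinuousOn_of_isGreatest_fiber hK hf.upperSemicontinuousOn hφ hM⟩

end FibrewiseMaximum

section Limsup

variable {X Y γ : Type*} {l : Filter X} {f : X → γ}

lemma limsup_eq_ciInf_sSup_image [ConditionallyCompleteLattice γ] [NeBot l] {ι : Type*}
    {p : ι → Prop} {s : ι → Set X} (hl : l.HasBasis p s)
    (habove : ∀ i, p i → BddAbove (f '' s i)) (hbelow : l.IsCoboundedUnder (· ≤ ·) f) :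
    limsup f l = ⨅ i : {i // p i}, sSup (f '' s i) := by
  have : Nonempty {i // p i} := nonempty_subtype.2 hl.ex_mem
  have hev (i : {i // p i}) : ∀ᶠ x in l, f x ≤ sSup (f '' s i) := by
    filter_upwards [hl.mem_of_mem i.2] with x hx
    exact le_csSup (habove i i.2) (mem_image_of_mem f hx)
  apply le_antisymm
  · exact le_ciInf fun i => limsup_le_of_le hbelow (hev i)
  · obtain ⟨b, hb⟩ := hbelow
    refine le_csInf ⟨_, hev (Classical.arbitrary _)⟩ fun a ha => ?_
    obtain ⟨i, hi, his⟩ := hl.eventually_iff.1 ha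
    calc ⨅ i : {i // p i}, sSup (f '' s i)
        ≤ sSup (f '' s i) := ciInf_le ⟨b, forall_mem_range.2 fun j => hb _ (hev j)⟩ ⟨i, hi⟩
      _ ≤ a := csSup_le ((Filter.nonempty_of_mem (hl.mem_of_mem hi)).image f)
          (forall_mem_image.2 fun x hx => his hx)

variable [TopologicalSpace X] {K S : Set X} {x : X}

lemma mapClusterPt_iff_exists_clusterPt [TopologicalSpace γ] [T2Space γ] (hK : IsCompact K)
    (hl : l ≤ 𝓟 K) (hf : ContinuousOn f K) {c : γ} :
    MapClusterPt c l f ↔ ∃ x ∈ K, ClusterPt x l ∧ f x = c := by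
  constructor
  · intro hc
    have : NeBot (comap f (𝓝 c) ⊓ l) := neBot_inf_comap_iff_map'.2 hc
    obtain ⟨x, hxK, hx⟩ := hK (inf_le_right.trans hl : comap f (𝓝 c) ⊓ l ≤ 𝓟 K)
    have : NeBot (𝓝 x ⊓ (comap f (𝓝 c) ⊓ l)) := hx
    have hfx : Tendsto f (𝓝 x ⊓ (comap f (𝓝 c) ⊓ l)) (𝓝 (f x)) :=
      (hf x hxK).mono_left (inf_le_inf_left _ (inf_le_right.trans hl))
    have hfc : Tendsto f (𝓝 x ⊓ (comap f (𝓝 c) ⊓ l)) (𝓝 c) :=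
      tendsto_comap.mono_left (inf_le_right.trans inf_le_left)
    exact ⟨x, hxK, hx.of_inf_right, tendsto_nhds_unique hfx hfc⟩
  · rintro ⟨x, hxK, hx, rfl⟩
    have : NeBot (𝓝 x ⊓ l) := hx
    have hfx : Tendsto f (𝓝 x ⊓ l) (𝓝 (f x)) :=
      (hf x hxK).mono_left (inf_le_inf_left _ hl)
    exact hfx.mapClusterPt.mono inf_le_right

lemma isGreatest_limsup_of_isCompact [ConditionallyCompleteLinearOrder γ] [TopologicalSpace γ]
    [OrderTopology γ] [NeBot l] (hK : IsCompact K) (hl : l ≤ 𝓟 K)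
    (hf : ContinuousOn f K) : IsGreatest (f '' (K ∩ {x | ClusterPt x l})) (limsup f l) := by
  have habove : l.IsBoundedUnder (· ≤ ·) f :=
    (hK.bddAbove_image hf).isBoundedUnder (le_principal_iff.1 hl)
  have hbelow : l.IsBoundedUnder (· ≥ ·) f :=
    (hK.bddBelow_image hf).isBoundedUnder (le_principal_iff.1 hl)
  convert isGreatest_mapClusterPt_limsup hbelow.isCoboundedUnder_le habove using 1
  ext c
  simp only [mapClusterPt_iff_exists_clusterPt hK hl hf, mem_image, mem_inter_iff, mem_ofPred_eq,
    and_assoc]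

lemma clusterPt_comap_nhds_inf_principal_iff [TopologicalSpace Y] [T2Space Y] {φ : X → Y} {y : Y}
    (hφ : Continuous φ) : ClusterPt x (comap φ (𝓝 y) ⊓ 𝓟 S) ↔ x ∈ closure S ∩ φ ⁻¹' {y} := by
  constructor
  · intro hx
    have : NeBot (𝓝 x ⊓ (comap φ (𝓝 y) ⊓ 𝓟 S)) := hx
    have hφx : Tendsto φ (𝓝 x ⊓ (comap φ (𝓝 y) ⊓ 𝓟 S)) (𝓝 (φ x)) :=
      (hφ.tendsto x).mono_left inf_le_left
    have hφy : Tendsto φ (𝓝 x ⊓ (comap φ (𝓝 y) ⊓ 𝓟 S)) (𝓝 y) :=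
      tendsto_comap.mono_left (inf_le_right.trans inf_le_left)
    exact ⟨mem_closure_iff_clusterPt.2 hx.of_inf_right, tendsto_nhds_unique hφx hφy⟩
  · rintro ⟨hx, rfl⟩
    rw [ClusterPt, ← inf_assoc, inf_eq_left.2 hφ.continuousAt.tendsto.le_comap]
    exact mem_closure_iff_clusterPt.1 hx

end Limsup

section Spectrum

variable {S : Set (ℝ × ℝ)} {β : ℝ}

lemma Fspec_eq_limsup [NeBot (comap Prod.snd (𝓝 β) ⊓ 𝓟 S)]
    (habove : BddAbove ((fun p : ℝ × ℝ => p.1 / p.2) '' S))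
    (hbelow : BddBelow ((fun p : ℝ × ℝ => p.1 / p.2) '' S)) :
    Fspec S β = limsup (fun p : ℝ × ℝ => p.1 / p.2) (comap Prod.snd (𝓝 β) ⊓ 𝓟 S) := by
  have hbasis := (Metric.nhds_basis_ball.comap Prod.snd).inf_principal S (l := comap _ (𝓝 β))
  have hcobdd : IsCoboundedUnder (· ≤ ·) (comap Prod.snd (𝓝 β) ⊓ 𝓟 S)
      fun p : ℝ × ℝ => p.1 / p.2 :=
    (hbelow.isBoundedUnder (mem_inf_of_right (mem_principal_self S))).isCoboundedUnder_le
  rw [limsup_eq_ciInf_sSup_image hbasis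
    (fun ε _ => habove.mono (image_mono inter_subset_right)) hcobdd, Fspec]
  congr! 3 with ε
  ext r
  simp [Real.dist_eq, eq_comm, and_comm, and_assoc]

lemma isGreatest_Fspec (hK : IsCompact (closure S))
    (hcont : ContinuousOn (fun p : ℝ × ℝ => p.1 / p.2) (closure S))
    (hβ : β ∈ Prod.snd '' closure S) :
    IsGreatest ((fun p : ℝ × ℝ => p.1 / p.2) '' (closure S ∩ Prod.snd ⁻¹' {β})) (Fspec S β) := by
  have hcluster (p : ℝ × ℝ) : ClusterPt p (comap Prod.snd (𝓝 β) ⊓ 𝓟 S) ↔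
      p ∈ closure S ∩ Prod.snd ⁻¹' {β} := clusterPt_comap_nhds_inf_principal_iff continuous_snd
  have : NeBot (comap Prod.snd (𝓝 β) ⊓ 𝓟 S) := by
    obtain ⟨p, hp⟩ := hβ
    exact ((hcluster p).2 hp).neBot.mono inf_le_right
  have hlimsup := isGreatest_limsup_of_isCompact hK
    (inf_le_right.trans (principal_mono.2 subset_closure) :
      comap Prod.snd (𝓝 β) ⊓ 𝓟 S ≤ 𝓟 (closure S)) hcont
  rw [← Fspec_eq_limsup ((hK.bddAbove_image hcont).mono (image_mono subset_closure))
    ((hK.bddBelow_image hcont).mono (image_mono subset_closure))] at hlimsup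
  simpa only [hcluster, ofPred_mem_eq, ← inter_assoc, inter_self] using hlimsup

lemma Icc_sInf_sSup_subset_closure {s : Set ℝ} (hs : Convex ℝ s) (hne : s.Nonempty)
    (hb : IsBounded s) : Icc (sInf s) (sSup s) ⊆ closure s :=
  hs.closure.ordConnected.out (csInf_mem_closure hne hb.bddBelow)
    (csSup_mem_closure hne hb.bddAbove)

theorem Fspec_continuousOn_general {S : Set (ℝ × ℝ)} (hS : IsBounded S) {c : ℝ} (hc : 0 < c)
    (hcS : ∀ p ∈ S, c ≤ |p.2|) (hne : S.Nonempty) (hconv : Convex ℝ S) :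
    ContinuousOn (Fspec S)
      (Icc (sInf {l : ℝ | ∃ h : ℝ, (h, l) ∈ S}) (sSup {l : ℝ | ∃ h : ℝ, (h, l) ∈ S})) := by
  have hK : IsCompact (closure S) := hS.isCompact_closure
  have hsnd : ∀ p ∈ closure S, p.2 ≠ 0 := fun p hp =>
    have hcp : c ≤ |p.2| := closure_minimal hcS (isClosed_le continuous_const continuous_snd.abs) hp
    abs_pos.1 (hc.trans_le hcp)
  have hratio : ContinuousOn (fun p : ℝ × ℝ => p.1 / p.2) (closure S) :=
    continuousOn_fst.div continuousOn_snd hsnd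
  have hmax : ContinuousOn (Fspec S) (Prod.snd '' closure S) :=
    continuousOn_of_isGreatest_fiber_of_convex (φ := (LinearMap.snd ℝ ℝ ℝ).toAffineMap) hK
      hconv.closure hratio continuousOn_snd fun _ hy => isGreatest_Fspec hK hratio hy
  have hΛ : {l : ℝ | ∃ h : ℝ, (h, l) ∈ S} = Prod.snd '' S := by
    ext l
    simp
  rw [hΛ]
  refine hmax.mono ((Icc_sInf_sSup_subset_closure (hconv.linear_image (LinearMap.snd ℝ ℝ ℝ))
    (hne.image _) hS.image_snd).trans ?_)
  exact (image_closure_of_isCompact hK continuousOn_snd).superset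

end Spectrum

/-- Abstract form of Theorem C(a): for a nonempty convex set `S` of
(entropy, Lyapunov exponent) pairs, the spectrum `Fspec S` is continuous on
the interval `I = [inf Λ, sup Λ]`, where `Λ` is the projection of `S` onto
the second coordinate. -/
theorem Fspec_continuousOn (H lm lM : ℝ) (hH : 0 ≤ H) (hlm : 0 < lm) (hl : lm ≤ lM)
    (S : Set (ℝ × ℝ)) (hS : S ⊆ Set.Icc (0 : ℝ) H ×ˢ Set.Icc lm lM)
    (hne : S.Nonempty) (hconv : Convex ℝ S) :
    ContinuousOn (Fspec S)
      (Set.Icc (sInf {l : ℝ | ∃ h : ℝ, (h, l) ∈ S}) (sSup {l : ℝ | ∃ h : ℝ, (h, l) ∈ S})) :=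
  Fspec_continuousOn_general
    (((Metric.isBounded_Icc 0 H).prod (Metric.isBounded_Icc lm lM)).subset hS) hlm
    (fun _ hp => (hS hp).2.1.trans (le_abs_self _)) hne hconv
end

section
/- Fix real numbers H ≥ 0 and 0 < λ_m ≤ λ_M. Let S ⊆ [0,H] × [λ_m,λ_M] be nonempty and convex, let Λ = { λ : (h,λ) ∈ S for some h }, and let I = [inf Λ, sup Λ]. Define F_S : ℝ → ℝ by F_S(β) = inf_{ε>0} sup{ h/λ : (h,λ) ∈ S, |λ - β| < ε }, with the convention sup ∅ = 0. Then for all β, β' ∈ I and all t ∈ [0,1], min{F_S(β), F_S(β')} ≤ F_S(t·β + (1-t)·β'). -/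
/-!
For `s > 0`, the superlevel set `{β | s ≤ Fspec S β}` is the intersection over `a < s` of the
closures of the `λ`-projections of `{(h, λ) ∈ S | a < h / λ}`. Since `a < h / λ` is the affine
condition `a * λ < h` when `λ > 0`, all these sets are convex.
-/

open Real

open Set

lemma quasiconcaveOn_div_of_affineMap {𝕜 E : Type*} [Field 𝕜] [LinearOrder 𝕜]
    [IsStrictOrderedRing 𝕜] [AddCommGroup E] [Module 𝕜 E] {s : Set E} (hs : Convex 𝕜 s)
    (f g : E →ᵃ[𝕜] 𝕜) (hg : ∀ x ∈ s, 0 < g x) :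
    QuasiconcaveOn 𝕜 s fun x => f x / g x := by
  intro r
  have hset : {x ∈ s | r ≤ f x / g x} = s ∩ (f - r • g) ⁻¹' Ici 0 := by
    ext x
    refine and_congr_right fun hx => ?_
    simp [le_div_iff₀ (hg x hx)]
  rw [hset]
  exact hs.inter ((convex_Ici 0).affine_preimage _)

section

variable {S : Set (ℝ × ℝ)}

lemma sSup_ratio_near_nonneg (hS : ∀ p ∈ S, 0 ≤ p.1 / p.2) (β ε : ℝ) :
    0 ≤ sSup {r : ℝ | ∃ p ∈ S, |p.2 - β| < ε ∧ r = p.1 / p.2} := by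
  apply Real.sSup_nonneg
  rintro _ ⟨p, hp, -, rfl⟩
  exact hS p hp

lemma Fspec_nonneg (hS : ∀ p ∈ S, 0 ≤ p.1 / p.2) (β : ℝ) : 0 ≤ Fspec S β :=
  Real.iInf_nonneg fun ε => sSup_ratio_near_nonneg hS β ε

lemma Fspec_le_sSup (hS : ∀ p ∈ S, 0 ≤ p.1 / p.2) (β : ℝ) {ε : ℝ} (hε : 0 < ε) :
    Fspec S β ≤ sSup {r : ℝ | ∃ p ∈ S, |p.2 - β| < ε ∧ r = p.1 / p.2} :=
  ciInf_le ⟨0, forall_mem_range.2 fun δ : {δ : ℝ // 0 < δ} => sSup_ratio_near_nonneg hS β δ⟩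
    (⟨ε, hε⟩ : {ε : ℝ // 0 < ε})

lemma mem_closure_snd_image_sep_iff {P : ℝ × ℝ → Prop} {β : ℝ} :
    β ∈ closure (Prod.snd '' {p ∈ S | P p}) ↔ ∀ ε > 0, ∃ p ∈ S, |p.2 - β| < ε ∧ P p := by
  simp only [Metric.mem_closure_iff, exists_mem_image, mem_ofPred_eq, Real.dist_eq, abs_sub_comm β,
    and_assoc, and_comm (a := P _)]

lemma le_Fspec_iff (hS : ∀ p ∈ S, 0 ≤ p.1 / p.2)
    (hbdd : BddAbove ((fun p : ℝ × ℝ => p.1 / p.2) '' S)) {s β : ℝ} (hs : 0 < s) :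
    s ≤ Fspec S β ↔ ∀ a < s, β ∈ closure (Prod.snd '' {p ∈ S | a < p.1 / p.2}) := by
  simp only [mem_closure_snd_image_sep_iff]
  constructor
  · intro hsF a ha ε hε
    have hsup := hsF.trans (Fspec_le_sSup hS β hε)
    have hne : {r : ℝ | ∃ p ∈ S, |p.2 - β| < ε ∧ r = p.1 / p.2}.Nonempty := by
      by_contra! hempty
      rw [hempty, Real.sSup_empty] at hsup
      exact hs.not_ge hsup
    obtain ⟨_, ⟨p, hp, hpβ, rfl⟩, hap⟩ := exists_lt_of_lt_csSup hne (ha.trans_le hsup)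
    exact ⟨p, hp, hpβ, hap⟩
  · intro h
    have : Nonempty {ε : ℝ // 0 < ε} := ⟨⟨1, one_pos⟩⟩
    refine le_ciInf fun ⟨ε, hε⟩ => le_of_forall_lt fun a ha => ?_
    obtain ⟨p, hp, hpβ, hap⟩ := h a ha ε hε
    refine hap.trans_le (le_csSup (hbdd.mono ?_) ⟨p, hp, hpβ, rfl⟩)
    rintro _ ⟨q, hq, -, rfl⟩
    exact mem_image_of_mem _ hq

theorem Fspec_quasiconcave_general (hconv : Convex ℝ S) (hS : ∀ p ∈ S, 0 ≤ p.1 ∧ 0 < p.2)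
    (hbdd : BddAbove ((fun p : ℝ × ℝ => p.1 / p.2) '' S)) :
    QuasiconcaveOn ℝ univ (Fspec S) := by
  have hratio : ∀ p ∈ S, 0 ≤ p.1 / p.2 := fun p hp => div_nonneg (hS p hp).1 (hS p hp).2.le
  have hquasi : QuasiconcaveOn ℝ S fun p => p.1 / p.2 :=
    quasiconcaveOn_div_of_affineMap hconv (LinearMap.fst ℝ ℝ ℝ).toAffineMap
      (LinearMap.snd ℝ ℝ ℝ).toAffineMap fun p hp => (hS p hp).2
  refine convex_univ.quasiconcaveOn_of_convex_ge fun s => ?_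
  rcases le_or_gt s 0 with hs | hs
  · simpa only [hs.trans (Fspec_nonneg hratio _), ofPred_true] using convex_univ
  · simp only [le_Fspec_iff hratio hbdd hs, ofPred_forall]
    exact convex_iInter₂ fun a _ =>
      ((hquasi.convex_gt a).linear_image (LinearMap.snd ℝ ℝ ℝ)).closure

end

/-- Abstract form of Lemma 3.3: quasiconcavity of the Lyapunov spectrum,
`min {F(β), F(β')} ≤ F(tβ + (1-t)β')` on `I = [inf Λ, sup Λ]`. -/
theorem Fspec_quasiconcave (H lm lM : ℝ) (hH : 0 ≤ H) (hlm : 0 < lm) (hl : lm ≤ lM)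
    (S : Set (ℝ × ℝ)) (hS : S ⊆ Set.Icc (0 : ℝ) H ×ˢ Set.Icc lm lM)
    (hne : S.Nonempty) (hconv : Convex ℝ S) :
    ∀ β β' : ℝ,
      β ∈ Set.Icc (sInf {l : ℝ | ∃ h : ℝ, (h, l) ∈ S}) (sSup {l : ℝ | ∃ h : ℝ, (h, l) ∈ S}) →
      β' ∈ Set.Icc (sInf {l : ℝ | ∃ h : ℝ, (h, l) ∈ S}) (sSup {l : ℝ | ∃ h : ℝ, (h, l) ∈ S}) →
      ∀ t : ℝ, t ∈ Set.Icc (0 : ℝ) 1 →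
        min (Fspec S β) (Fspec S β') ≤ Fspec S (t * β + (1 - t) * β') := by
  rintro β β' - - t ⟨ht₀, ht₁⟩
  have hbdd : BddAbove ((fun p : ℝ × ℝ => p.1 / p.2) '' S) :=
    ⟨H / lm, forall_mem_image.2 fun _ hp => div_le_div₀ hH (hS hp).1.2 hlm (hS hp).2.1⟩
  have hF : QuasiconcaveOn ℝ univ (Fspec S) :=
    Fspec_quasiconcave_general hconv (fun _ hp => ⟨(hS hp).1.1, hlm.trans_le (hS hp).2.1⟩) hbdd
  exact (quasiconcaveOn_iff_min_le.1 hF).2 (mem_univ β) (mem_univ β') ht₀ (sub_nonneg.2 ht₁)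
    (add_sub_cancel t 1)
end
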